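/- Let X = ℓ∞ⁿ and let Y be a two-dimensional real normed linear space. Let T : X → Y be a bounded linear operator with ‖T‖ = 1 such that Ext(B_X) ⊆ M_T and Tx is smooth for every x ∈ Ext(B_X). Suppose rank(T) = 2 and there exist x ∈ Ext(B_X) and distinct points u, v ∈ T(B_X) such that Tx lies in the open segment between u and v (i.e., Tx is an interior point of some line segment of T(B_X)). Then T is n-smooth, i.e., dim span J(T) = n. -/

import Mathlib

open Metric Set Module

/-- `J x` is the set of supporting functionals of `x`. -/
def suppFunctionals {E : Type*} [NormedAddCommGroup E] [NormedSpace ℝ E] (x : E) :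
    Set (E →L[ℝ] ℝ) := {f | ‖f‖ = 1 ∧ f x = 1}

/-- A point is smooth if it has a unique supporting functional. -/
def IsSmoothPoint {E : Type*} [NormedAddCommGroup E] [NormedSpace ℝ E] (x : E) : Prop :=
  ∃ g, suppFunctionals x = {g}

/-!
For a polyhedral domain `X` and an operator `T` of norm one that maps every extreme point `x` of
`B_X` to a smooth point with supporting functional `g x`, the norm of `L(X, Y)` has derivative
`S ↦ max_x g x (S x)` at `T`, so `J(T)` and the elementary tensors `g x ⊗ x` have the same linear
span. If all the `g x` are multiples of one functional `g`, this span is `g ⊗ X`, of dimension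
`dim X`.

For `X = ℓ∞ⁿ` and `T` of rank two this does happen. Let `T x` be interior to a segment of `T(B_X)`,
let `g` support it, and choose a coordinate `j` on which `g ∘ T` depends. The face of `B_X` where
`g ∘ T = 1` has constant `j`-th coordinate, so flipping the sign of that coordinate translates the
segment to a parallel one through `T z`, where `z` is `x` flipped. The supporting functionals of
`T x` and `T z` are then proportional on the plane `T(X)`, which gives `g (T z) = -1`. Hence `x` and
`-z` lie on the same face although they differ in every coordinate but `j`: the functional `g ∘ T`
depends on the `j`-th coordinate alone, and it is `±1` at every vertex.
-/

open Filter Topology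

section SupportingFunctionals

variable {E : Type*} [NormedAddCommGroup E] [NormedSpace ℝ E] {f g : E →L[ℝ] ℝ} {y z : E}

theorem norm_apply_le_one {F : Type*} [NormedAddCommGroup F] [NormedSpace ℝ F] {T : E →L[ℝ] F}
    (hT : ‖T‖ ≤ 1) (hy : ‖y‖ ≤ 1) : ‖T y‖ ≤ 1 := by
  simpa using T.le_of_opNorm_le_of_le hT hy

theorem norm_comp_le_one {F : Type*} [NormedAddCommGroup F] [NormedSpace ℝ F] {T : F →L[ℝ] E}
    (hf : ‖f‖ ≤ 1) (hT : ‖T‖ ≤ 1) : ‖f.comp T‖ ≤ 1 :=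
  (f.opNorm_comp_le T).trans (mul_le_one₀ hf (norm_nonneg T) hT)

theorem apply_le_one (hf : ‖f‖ ≤ 1) (hy : ‖y‖ ≤ 1) : f y ≤ 1 :=
  (le_abs_self _).trans (norm_apply_le_one hf hy)

theorem IsSmoothPoint.suppFunctionals_nonempty (hy : IsSmoothPoint y) :
    (suppFunctionals y).Nonempty := by
  obtain ⟨g, hg⟩ := hy
  exact hg ▸ singleton_nonempty g

theorem IsSmoothPoint.suppFunctionals_eq_singleton (hy : IsSmoothPoint y)
    (hg : g ∈ suppFunctionals y) : suppFunctionals y = {g} := by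
  obtain ⟨g', hg'⟩ := hy
  rw [hg'] at hg ⊢
  rw [mem_singleton_iff.1 hg]

theorem mem_suppFunctionals_of_norm_le_one (hy : ‖y‖ ≤ 1) (hf : ‖f‖ ≤ 1) (hfy : f y = 1) :
    f ∈ suppFunctionals y :=
  ⟨hf.antisymm <| by simpa [hfy] using f.le_of_opNorm_le_of_le le_rfl hy, hfy⟩

theorem norm_eq_one_of_mem_suppFunctionals (hy : ‖y‖ ≤ 1) (hg : g ∈ suppFunctionals y) :
    ‖y‖ = 1 :=
  hy.antisymm <| by simpa [hg.2] using g.le_of_opNorm_le hg.1.le y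

theorem apply_eq_one_of_mem_openSegment {u v : E} (hf : ‖f‖ ≤ 1) (hu : ‖u‖ ≤ 1) (hv : ‖v‖ ≤ 1)
    (hy : y ∈ openSegment ℝ u v) (hfy : f y = 1) : f u = 1 ∧ f v = 1 := by
  obtain ⟨a, b, ha, hb, hab, rfl⟩ := hy
  simp only [map_add, map_smul, smul_eq_mul] at hfy
  have hfu := apply_le_one hf hu
  have hfv := apply_le_one hf hv
  constructor <;> nlinarith

/-- Šmulian's lemma. -/
theorem tendsto_apply_of_suppFunctionals_eq_singleton {α : Type*} {l : Filter α}
    {f : α → E →L[ℝ] ℝ} (hy : ‖y‖ ≤ 1) (hg : suppFunctionals y = {g}) (hf : ∀ a, ‖f a‖ ≤ 1)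
    (hfy : Tendsto (fun a ↦ f a y) l (𝓝 1)) (z : E) : Tendsto (fun a ↦ f a z) l (𝓝 (g z)) := by
  have weak_star_tendsto :
      Tendsto (fun a ↦ StrongDual.toWeakDual (f a)) l (𝓝 (StrongDual.toWeakDual g)) := by
    refine (WeakDual.isCompact_closedBall (0 : E →L[ℝ] ℝ) 1).tendsto_nhds_of_unique_mapClusterPt
      (Eventually.of_forall fun a ↦ by simpa using hf a) fun f₀ hf₀ hcluster ↦ ?_
    have hf₀y : f₀ y = 1 :=
      have : MapClusterPt (f₀ y) l fun a ↦ f a y :=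
        hcluster.continuousAt_comp (WeakDual.eval_continuous y).continuousAt
      eq_of_nhds_neBot (this.clusterPt.mono hfy).neBot
    have : WeakDual.toStrongDual f₀ ∈ suppFunctionals y :=
      mem_suppFunctionals_of_norm_le_one hy (by simpa using hf₀) hf₀y
    rw [hg] at this
    exact this
  exact ((WeakDual.eval_continuous z).tendsto _).comp weak_star_tendsto

theorem hasLineDerivAt_norm_of_suppFunctionals_eq_singleton (hy : ‖y‖ ≤ 1)
    (hg : suppFunctionals y = {g}) (z : E) : HasLineDerivAt ℝ (fun v : E ↦ ‖v‖) (g z) y z := by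
  have hgy : g ∈ suppFunctionals y := hg ▸ mem_singleton g
  have hy1 : ‖y‖ = 1 := norm_eq_one_of_mem_suppFunctionals hy hgy
  choose f hf hfval using fun t : ℝ ↦ exists_dual_vector'' ℝ (y + t • z)
  have hfval (t : ℝ) : ‖y + t • z‖ = f t y + t * f t z := by simpa using (hfval t).symm
  have hfy : Tendsto (fun t ↦ f t y) (𝓝 0) (𝓝 1) := by
    have lower : Tendsto (fun t : ℝ ↦ ‖y + t • z‖ - |t| * ‖z‖) (𝓝 0) (𝓝 1) :=
      Continuous.tendsto' (by fun_prop) _ _ (by simp [hy1])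
    refine tendsto_of_tendsto_of_tendsto_of_le_of_le lower tendsto_const_nhds (fun t ↦ ?_)
      fun t ↦ apply_le_one (hf t) hy
    have : t * f t z ≤ |t| * ‖z‖ := by
      simpa [norm_smul] using (le_abs_self _).trans ((f t).le_of_opNorm_le (hf t) (t • z))
    linarith [hfval t]
  have hfz : Tendsto (fun t ↦ f t z - g z) (𝓝 0) (𝓝 0) := by
    simpa using (tendsto_apply_of_suppFunctionals_eq_singleton hy hg hf hfy z).sub_const (g z)
  rw [HasLineDerivAt, hasDerivAt_iff_isLittleO_nhds_zero]
  refine Asymptotics.IsBigO.trans_isLittleO (g := fun t ↦ t * (f t z - g z))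
    (.of_bound' <| .of_forall fun t ↦ ?_) ?_
  · have lower : 1 + t * g z ≤ ‖y + t • z‖ := by
      simpa [hgy.2] using (le_abs_self _).trans (g.le_of_opNorm_le hgy.1.le (y + t • z))
    have upper : ‖y + t • z‖ ≤ 1 + t * f t z :=
      (hfval t).le.trans <| by linarith [apply_le_one (hf t) hy]
    simp only [zero_add, zero_smul, add_zero, smul_eq_mul, hy1]
    exact abs_le_abs_of_nonneg (by linarith) (by linarith)
  · simpa using (Asymptotics.isBigO_refl (fun t : ℝ ↦ t) (𝓝 0)).mul_isLittleO
      ((Asymptotics.isLittleO_one_iff ℝ).2 hfz)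

end SupportingFunctionals

section ExtremePoints

variable {X Y : Type*} [NormedAddCommGroup X] [NormedSpace ℝ X] [FiniteDimensional ℝ X]
  [NormedAddCommGroup Y] [NormedSpace ℝ Y]

theorem opNorm_le_of_forall_mem_extremePoints {A : X →L[ℝ] Y} {r : ℝ} (hr : 0 ≤ r)
    (hA : ∀ x ∈ extremePoints ℝ (closedBall (0 : X) 1), ‖A x‖ ≤ r) : ‖A‖ ≤ r := by
  have hball : closedBall (0 : X) 1 ⊆ A ⁻¹' closedBall 0 r := by
    have : ProperSpace X := FiniteDimensional.proper_real X
    rw [← closure_convexHull_extremePoints (isCompact_closedBall (0 : X) 1)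
      (convex_closedBall _ _)]
    refine closure_minimal (convexHull_min (fun x hx ↦ by simpa using hA x hx) ?_)
      (isClosed_closedBall.preimage A.continuous)
    exact (convex_closedBall _ _).linear_preimage (A : X →ₗ[ℝ] Y)
  exact A.opNorm_le_of_unit_norm hr fun x hx ↦ by
    simpa using hball (mem_closedBall_zero_iff.2 hx.le)

theorem span_extremePoints_closedBall :
    Submodule.span ℝ (extremePoints ℝ (closedBall (0 : X) 1)) = ⊤ := by
  by_contra hne
  obtain ⟨f, hf, hker⟩ := Submodule.exists_le_ker_of_lt_top _ (lt_top_iff_ne_top.2 hne)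
  have hzero : ‖LinearMap.toContinuousLinearMap f‖ ≤ 0 :=
    opNorm_le_of_forall_mem_extremePoints le_rfl fun x hx ↦ by
      simpa using hker (Submodule.subset_span hx)
  exact hf (by simpa using hzero)

end ExtremePoints

section PolyhedralDomain

variable {X Y : Type*} [NormedAddCommGroup X] [NormedSpace ℝ X]
  [NormedAddCommGroup Y] [NormedSpace ℝ Y]

/-- The elementary tensor `g ⊗ x`, that is the functional `S ↦ g (S x)` on operators, as a
linear function of `x`. -/
noncomputable def dualTensor (g : Y →L[ℝ] ℝ) : X →L[ℝ] (X →L[ℝ] Y) →L[ℝ] ℝ :=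
  (ContinuousLinearMap.compL ℝ (X →L[ℝ] Y) Y ℝ g).comp (ContinuousLinearMap.apply ℝ Y)

@[simp]
theorem dualTensor_apply (g : Y →L[ℝ] ℝ) (x : X) (S : X →L[ℝ] Y) : dualTensor g x S = g (S x) :=
  rfl

theorem norm_dualTensor_apply_le (g : Y →L[ℝ] ℝ) (x : X) : ‖dualTensor g x‖ ≤ ‖g‖ * ‖x‖ :=
  ContinuousLinearMap.opNorm_le_bound _ (by positivity) fun S ↦
    (g.le_of_opNorm_le_of_le le_rfl (S.le_opNorm x)).trans_eq (by ring)

theorem dualTensor_injective {g : Y →L[ℝ] ℝ} (hg : g ≠ 0) :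
    Function.Injective (dualTensor (X := X) g) := by
  obtain ⟨y, hy⟩ := DFunLike.ne_iff.1 hg
  refine (injective_iff_map_eq_zero _).2 fun x hx ↦ ?_
  refine SeparatingDual.eq_zero_of_forall_dual_eq_zero (R := ℝ) fun f ↦ ?_
  have : f x * g y = 0 := by simpa using congr($hx (f.smulRight y))
  exact (mul_eq_zero.1 this).resolve_right hy

theorem dualTensor_mem_suppFunctionals {T : X →L[ℝ] Y} (hT : ‖T‖ ≤ 1) {x : X} (hx : ‖x‖ ≤ 1)
    {g : Y →L[ℝ] ℝ} (hg : g ∈ suppFunctionals (T x)) : dualTensor g x ∈ suppFunctionals T :=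
  mem_suppFunctionals_of_norm_le_one hT
    ((norm_dualTensor_apply_le g x).trans (by simpa [hg.1] using hx)) hg.2

variable [FiniteDimensional ℝ X] {T : X →L[ℝ] Y}

theorem apply_eq_zero_of_forall_mem_extremePoints
    (hfin : (extremePoints ℝ (closedBall (0 : X) 1)).Finite) (hT : ‖T‖ ≤ 1)
    {g : X → Y →L[ℝ] ℝ}
    (hg : ∀ x ∈ extremePoints ℝ (closedBall (0 : X) 1), suppFunctionals (T x) = {g x})
    {F : (X →L[ℝ] Y) →L[ℝ] ℝ} (hF : F ∈ suppFunctionals T) {S : X →L[ℝ] Y}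
    (hS : ∀ x ∈ extremePoints ℝ (closedBall (0 : X) 1), g x (S x) = 0) : F S = 0 := by
  suffices hnonpos : ∀ S : X →L[ℝ] Y,
      (∀ x ∈ extremePoints ℝ (closedBall (0 : X) 1), g x (S x) = 0) → F S ≤ 0 from
    (hnonpos S hS).antisymm <| by simpa using hnonpos (-S) (by simpa using hS)
  refine fun S hS ↦ le_of_forall_pos_le_add fun ε hε ↦ ?_
  have pointwise : ∀ x ∈ extremePoints ℝ (closedBall (0 : X) 1),
      ∀ᶠ t : ℝ in 𝓝 0, ‖T x + t • S x‖ ≤ 1 + ε * |t| := by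
    intro x hx
    have hTx : ‖T x‖ ≤ 1 := norm_apply_le_one hT (mem_closedBall_zero_iff.1 hx.1)
    have hderiv := hasLineDerivAt_norm_of_suppFunctionals_eq_singleton hTx (hg x hx) (S x)
    rw [hS x hx, HasLineDerivAt, hasDerivAt_iff_isLittleO_nhds_zero] at hderiv
    filter_upwards [hderiv.bound hε] with t ht
    simp only [zero_add, zero_smul, add_zero, smul_zero, sub_zero, Real.norm_eq_abs] at ht
    linarith [le_abs_self (‖T x + t • S x‖ - ‖T x‖)]
  have uniform : ∀ᶠ t : ℝ in 𝓝 0, ‖T + t • S‖ ≤ 1 + ε * |t| := by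
    filter_upwards [hfin.eventually_all.2 pointwise] with t ht
    exact opNorm_le_of_forall_mem_extremePoints (by positivity) ht
  obtain ⟨t, hnorm, ht⟩ :=
    ((uniform.filter_mono nhdsWithin_le_nhds).and (self_mem_nhdsWithin (s := Ioi (0 : ℝ)))).exists
  have hFt : 1 + t * F S ≤ ‖T + t • S‖ := by
    simpa [hF.2] using (le_abs_self _).trans (F.le_of_opNorm_le hF.1.le (T + t • S))
  rw [abs_of_pos ht] at hnorm
  exact le_of_mul_le_mul_left (by linarith) ht

theorem span_suppFunctionals_eq_span_dualTensor
    (hfin : (extremePoints ℝ (closedBall (0 : X) 1)).Finite) (hT : ‖T‖ ≤ 1)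
    {g : X → Y →L[ℝ] ℝ}
    (hg : ∀ x ∈ extremePoints ℝ (closedBall (0 : X) 1), suppFunctionals (T x) = {g x}) :
    Submodule.span ℝ (suppFunctionals T) =
      Submodule.span ℝ
        ((fun x ↦ dualTensor (g x) x) '' extremePoints ℝ (closedBall (0 : X) 1)) := by
  refine (Submodule.span_le.2 fun F hF ↦ ?_).antisymm (Submodule.span_mono ?_)
  · have := hfin.to_subtype
    have hmem : (F : (X →L[ℝ] Y) →ₗ[ℝ] ℝ) ∈ Submodule.span ℝ
        (range fun x : extremePoints ℝ (closedBall (0 : X) 1) ↦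
          (dualTensor (g x) x.1 : (X →L[ℝ] Y) →ₗ[ℝ] ℝ)) := by
      refine mem_span_of_iInf_ker_le_ker fun S hS ↦ ?_
      refine apply_eq_zero_of_forall_mem_extremePoints hfin hT hg hF fun x hx ↦ ?_
      exact (Submodule.mem_iInf _).1 hS ⟨x, hx⟩
    have := Fintype.ofFinite (extremePoints ℝ (closedBall (0 : X) 1))
    obtain ⟨c, hc⟩ := (Submodule.mem_span_range_iff_exists_fun ℝ).1 hmem
    have hF_eq : F = ∑ x, c x • dualTensor (g x) x.1 := by
      ext S
      simpa using congr($hc.symm S)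
    rw [hF_eq]
    exact Submodule.sum_mem _ fun x _ ↦
      Submodule.smul_mem _ _ (Submodule.subset_span (mem_image_of_mem _ x.2))
  · rintro _ ⟨x, hx, rfl⟩
    exact dualTensor_mem_suppFunctionals hT (mem_closedBall_zero_iff.1 hx.1)
      (hg x hx ▸ mem_singleton _)

theorem finrank_span_suppFunctionals_of_supported_by_multiples
    (hfin : (extremePoints ℝ (closedBall (0 : X) 1)).Finite) (hT : ‖T‖ = 1) {g : Y →L[ℝ] ℝ}
    (hg : ∀ x ∈ extremePoints ℝ (closedBall (0 : X) 1), ∃ c : ℝ, suppFunctionals (T x) = {c • g}) :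
    finrank ℝ (Submodule.span ℝ (suppFunctionals T)) = finrank ℝ X := by
  choose! c hc using hg
  have hnorm : ∀ x ∈ extremePoints ℝ (closedBall (0 : X) 1), |c x| * ‖g‖ = 1 := fun x hx ↦ by
    have hmem : c x • g ∈ suppFunctionals (T x) := hc x hx ▸ mem_singleton _
    simpa [norm_smul] using hmem.1
  have hspan :
      Submodule.span ℝ (suppFunctionals T) = LinearMap.range (dualTensor g).toLinearMap := by
    rw [span_suppFunctionals_eq_span_dualTensor hfin hT.le hc, LinearMap.range_eq_map,
      ← span_extremePoints_closedBall, Submodule.map_span]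
    refine le_antisymm ?_ ?_ <;> rw [Submodule.span_le] <;> rintro _ ⟨x, hx, rfl⟩
    · exact Submodule.smul_mem _ (c x) (Submodule.subset_span (mem_image_of_mem _ hx))
    · have hcx : c x ≠ 0 := fun h ↦ by simpa [h] using hnorm x hx
      exact (Submodule.smul_mem_iff _ hcx).1 (Submodule.subset_span ⟨x, hx, rfl⟩)
  have hg0 : g ≠ 0 := by
    rintro rfl
    have : ‖T‖ ≤ 0 := opNorm_le_of_forall_mem_extremePoints le_rfl fun x hx ↦ by
      simpa using hnorm x hx
    linarith
  rw [hspan, LinearMap.finrank_range_of_inj (dualTensor_injective hg0)]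

end PolyhedralDomain

section FlipCoord

variable {ι : Type*} [DecidableEq ι]

/-- The reflection of `ι → ℝ` that changes the sign of the `j`-th coordinate. -/
def flipCoord (j : ι) (x : ι → ℝ) : ι → ℝ := Function.update x j (-x j)

theorem flipCoord_eq_add_single (j : ι) (x : ι → ℝ) :
    flipCoord j x = Pi.single j (-2 * x j) + x := by
  ext i
  obtain rfl | hij := eq_or_ne i j
  · simp only [flipCoord, Function.update_self, Pi.add_apply, Pi.single_eq_same]
    ring
  · simp [flipCoord, hij]

theorem abs_flipCoord_apply (j : ι) (x : ι → ℝ) (i : ι) : |flipCoord j x i| = |x i| := by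
  obtain rfl | hij := eq_or_ne i j <;> simp [flipCoord, *]

end FlipCoord

section SupNorm

variable {ι : Type*} [Fintype ι] {x y : ι → ℝ}

theorem mem_extremePoints_closedBall_pi_iff :
    x ∈ extremePoints ℝ (closedBall (0 : ι → ℝ) 1) ↔ ∀ i, |x i| = 1 := by
  rw [closedBall_pi _ zero_le_one, extremePoints_pi]
  simp [Real.closedBall_eq_Icc, abs_eq, or_comm]

theorem finite_extremePoints_closedBall_pi :
    (extremePoints ℝ (closedBall (0 : ι → ℝ) 1)).Finite := by
  rw [closedBall_pi _ zero_le_one, extremePoints_pi]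
  exact Set.Finite.pi fun i ↦ by simp [Real.closedBall_eq_Icc]

variable [DecidableEq ι] {φ : (ι → ℝ) →L[ℝ] ℝ} {j : ι}

theorem apply_eq_sum_mul_apply_single (φ : (ι → ℝ) →L[ℝ] ℝ) (x : ι → ℝ) :
    φ x = ∑ i, x i * φ (Pi.single i 1) := by
  conv_lhs => rw [pi_eq_sum_univ' x]
  simp only [map_sum, map_smul, smul_eq_mul]

theorem apply_single_eq_zero_of_abs_lt_one (hφ : ‖φ‖ ≤ 1) (hx : ‖x‖ ≤ 1) (hφx : φ x = 1)
    (hxj : |x j| < 1) : φ (Pi.single j 1) = 0 := by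
  have nonpos (t : ℝ) (ht : |t| ≤ 1 - |x j|) : t * φ (Pi.single j 1) ≤ 0 := by
    have hnorm : ‖x + Pi.single j t‖ ≤ 1 := by
      refine (pi_norm_le_iff_of_nonneg zero_le_one).2 fun i ↦ ?_
      obtain rfl | hij := eq_or_ne i j
      · simpa using (abs_add_le (x i) t).trans (by linarith)
      · simpa [hij] using (norm_le_pi_norm x i).trans hx
    have hsingle : φ (Pi.single j t) = t * φ (Pi.single j 1) := by
      rw [← smul_eq_mul, ← map_smul, ← Pi.single_smul, smul_eq_mul, mul_one]
    have := apply_le_one hφ hnorm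
    rw [map_add, hφx, hsingle] at this
    linarith
  have hpos : 0 < 1 - |x j| := sub_pos.2 hxj
  have upper := nonpos (1 - |x j|) (abs_of_pos hpos).le
  have lower := nonpos (-(1 - |x j|)) (by rw [abs_neg, abs_of_pos hpos])
  nlinarith

theorem coord_eq_of_apply_eq_one (hφ : ‖φ‖ ≤ 1) (hφj : φ (Pi.single j 1) ≠ 0)
    (hx : ‖x‖ ≤ 1) (hφx : φ x = 1) (hy : ‖y‖ ≤ 1) (hφy : φ y = 1) : x j = y j := by
  by_contra hne
  have hxj := abs_le.1 ((norm_le_pi_norm x j).trans hx)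
  have hyj := abs_le.1 ((norm_le_pi_norm y j).trans hy)
  have hmid : |midpoint ℝ x y j| < 1 := by
    rw [midpoint_eq_smul_add, Pi.smul_apply, Pi.add_apply, smul_eq_mul, abs_lt]
    rcases lt_or_gt_of_ne hne with h | h <;> constructor <;> norm_num <;> linarith
  refine hφj (apply_single_eq_zero_of_abs_lt_one (x := midpoint ℝ x y) hφ ?_ ?_ hmid)
  · simpa using (convex_closedBall (0 : ι → ℝ) 1).midpoint_mem (by simpa) (by simpa)
  · norm_num [midpoint_eq_smul_add, hφx, hφy]

theorem norm_flipCoord (j : ι) (x : ι → ℝ) : ‖flipCoord j x‖ = ‖x‖ := by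
  simp [Pi.norm_def, nnnorm, abs_flipCoord_apply]

theorem abs_apply_eq_one_of_apply_flipCoord_eq_neg_one (hφ : ‖φ‖ ≤ 1)
    (hx : x ∈ extremePoints ℝ (closedBall (0 : ι → ℝ) 1)) (hφx : φ x = 1)
    (hflip : φ (flipCoord j x) = -1) (hy : y ∈ extremePoints ℝ (closedBall (0 : ι → ℝ) 1)) :
    |φ y| = 1 := by
  have hx1 := mem_extremePoints_closedBall_pi_iff.1 hx
  have hxnorm : ‖x‖ ≤ 1 := mem_closedBall_zero_iff.1 hx.1
  have hφi : ∀ i ≠ j, φ (Pi.single i 1) = 0 := by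
    intro i hij
    by_contra hne
    have hself : x i = -x i := by
      simpa [flipCoord, hij] using coord_eq_of_apply_eq_one (y := -flipCoord j x) hφ hne hxnorm hφx
        (by rwa [norm_neg, norm_flipCoord]) (by rw [map_neg, hflip, neg_neg])
    have : x i = 0 := by linarith
    simpa [this] using hx1 i
  have hφeq (w : ι → ℝ) : φ w = w j * φ (Pi.single j 1) := by
    rw [apply_eq_sum_mul_apply_single]
    exact Finset.sum_eq_single j (fun i _ hij ↦ by rw [hφi i hij, mul_zero]) (by simp)
  have hφj : |φ (Pi.single j 1)| = 1 := by
    simpa [hφeq x, abs_mul, hx1 j] using congr(|$hφx|)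
  rw [hφeq y, abs_mul, mem_extremePoints_closedBall_pi_iff.1 hy j, hφj, one_mul]

end SupNorm

theorem apply_eq_mul_apply_of_finrank_eq_two {K V : Type*} [Field K] [AddCommGroup V] [Module K V]
    (hV : finrank K V = 2) {f g : V →ₗ[K] K} {x w : V} (hgx : g x = 1) (hw : w ≠ 0)
    (hfw : f w = 0) (hgw : g w = 0) (v : V) : f v = f x * g v := by
  have hind : LinearIndependent K ![x, w] := by
    refine LinearIndependent.pair_iff.2 fun a b hab ↦ ?_
    have ha : a = 0 := by simpa [hgx, hgw] using congr(g $hab)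
    exact ⟨ha, by simpa [ha, hw] using hab⟩
  have hext : f = f x • g := (basisOfLinearIndependentOfCardEqFinrank hind (by simp [hV])).ext
    fun i ↦ by fin_cases i <;> simp [hgx, hfw, hgw]
  exact congr($hext v)

section RankTwo

variable {ι : Type*} [Fintype ι] {Y : Type*} [NormedAddCommGroup Y] [NormedSpace ℝ Y]
  {T : (ι → ℝ) →L[ℝ] Y} {x u v : ι → ℝ}

section Flip

variable [DecidableEq ι] {j : ι} {g h : Y →L[ℝ] ℝ}

theorem apply_sub_eq_zero_of_mem_suppFunctionals_flipCoord (hT : ‖T‖ ≤ 1) (hu : ‖u‖ ≤ 1)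
    (hv : ‖v‖ ≤ 1) (hseg : T x ∈ openSegment ℝ (T u) (T v)) (huj : u j = x j) (hvj : v j = x j)
    (hh : h ∈ suppFunctionals (T (flipCoord j x))) : h (T u - T v) = 0 := by
  have flip_translates (w : ι → ℝ) (hw : w j = x j) :
      T (flipCoord j w) = T (Pi.single j (-2 * x j)) + T w := by
    rw [flipCoord_eq_add_single, hw, map_add]
  have hseg_flip : T (flipCoord j x) ∈ openSegment ℝ (T (flipCoord j u)) (T (flipCoord j v)) := by
    rw [flip_translates x rfl, flip_translates u huj, flip_translates v hvj]
    exact (mem_openSegment_translate ℝ _).2 hseg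
  obtain ⟨hhu, hhv⟩ := apply_eq_one_of_mem_openSegment hh.1.le
    (norm_apply_le_one hT ((norm_flipCoord j u).trans_le hu))
    (norm_apply_le_one hT ((norm_flipCoord j v).trans_le hv)) hseg_flip hh.2
  rw [← add_sub_add_left_eq_sub (T u) (T v) (T (Pi.single j (-2 * x j))), ← flip_translates u huj,
    ← flip_translates v hvj, map_sub, hhu, hhv, sub_self]

theorem apply_flipCoord_eq_neg_one (hT : ‖T‖ ≤ 1)
    (hrank : finrank ℝ (LinearMap.range (T : (ι → ℝ) →ₗ[ℝ] Y)) = 2)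
    (hx : ‖x‖ ≤ 1) (hg : g ∈ suppFunctionals (T x)) (hu : ‖u‖ ≤ 1) (hv : ‖v‖ ≤ 1)
    (huv : T u ≠ T v) (hseg : T x ∈ openSegment ℝ (T u) (T v))
    (hj : g (T (Pi.single j 1)) ≠ 0) (hh : h ∈ suppFunctionals (T (flipCoord j x))) :
    g (T (flipCoord j x)) = -1 := by
  have hφ : ‖g.comp T‖ ≤ 1 := norm_comp_le_one hg.1.le hT
  have hflip : ‖flipCoord j x‖ ≤ 1 := (norm_flipCoord j x).trans_le hx
  obtain ⟨hgu, hgv⟩ := apply_eq_one_of_mem_openSegment hg.1.le (norm_apply_le_one hT hu)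
    (norm_apply_le_one hT hv) hseg hg.2
  have hhuv : h (T u - T v) = 0 := apply_sub_eq_zero_of_mem_suppFunctionals_flipCoord hT hu hv hseg
    (coord_eq_of_apply_eq_one hφ hj hu hgu hx hg.2)
    (coord_eq_of_apply_eq_one hφ hj hv hgv hx hg.2) hh
  have hmul : h (T x) * g (T (flipCoord j x)) = 1 := by
    let R := LinearMap.range (T : (ι → ℝ) →ₗ[ℝ] Y)
    have proportional (y : R) : h y = h (T x) * g y :=
      apply_eq_mul_apply_of_finrank_eq_two hrank (f := h.toLinearMap.domRestrict R)
        (g := g.toLinearMap.domRestrict R) (x := ⟨T x, x, rfl⟩)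
        (w := ⟨T u - T v, u - v, map_sub T u v⟩) hg.2 (by simpa [Subtype.ext_iff, sub_eq_zero])
        hhuv (by simp [hgu, hgv]) y
    exact (proportional ⟨_, flipCoord j x, rfl⟩).symm.trans hh.2
  have habs : |g (T (flipCoord j x))| = 1 := by
    refine (norm_apply_le_one hφ hflip).antisymm ?_
    calc 1 = |h (T x)| * |g (T (flipCoord j x))| := by rw [← abs_mul, hmul, abs_one]
      _ ≤ |g (T (flipCoord j x))| := mul_le_of_le_one_left (abs_nonneg _)
        (norm_apply_le_one hh.1.le (norm_apply_le_one hT hx))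
  refine (eq_or_eq_neg_of_abs_eq habs).resolve_left fun hone ↦ ?_
  have hxj : x j = -x j := by
    simpa [flipCoord] using coord_eq_of_apply_eq_one hφ hj hx hg.2 hflip hone
  have hxj_zero : x j = 0 := by linarith
  exact hj (apply_single_eq_zero_of_abs_lt_one hφ hx hg.2 (by simp [hxj_zero]))

end Flip

theorem exists_suppFunctionals_eq_singleton_smul (hT : ‖T‖ ≤ 1)
    (hsm : ∀ y ∈ extremePoints ℝ (closedBall (0 : ι → ℝ) 1), IsSmoothPoint (T y))
    (hrank : finrank ℝ (LinearMap.range (T : (ι → ℝ) →ₗ[ℝ] Y)) = 2)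
    (hx : x ∈ extremePoints ℝ (closedBall (0 : ι → ℝ) 1)) (hu : ‖u‖ ≤ 1) (hv : ‖v‖ ≤ 1)
    (huv : T u ≠ T v) (hseg : T x ∈ openSegment ℝ (T u) (T v)) :
    ∃ g : Y →L[ℝ] ℝ, ∀ y ∈ extremePoints ℝ (closedBall (0 : ι → ℝ) 1),
      ∃ c : ℝ, suppFunctionals (T y) = {c • g} := by
  classical
  have hxnorm : ‖x‖ ≤ 1 := mem_closedBall_zero_iff.1 hx.1
  obtain ⟨g, hg⟩ := (hsm x hx).suppFunctionals_nonempty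
  have hφ : ‖g.comp T‖ ≤ 1 := norm_comp_le_one hg.1.le hT
  obtain ⟨j, hj⟩ : ∃ j, g (T (Pi.single j 1)) ≠ 0 := by
    by_contra! hzero
    have : g (T x) = 0 := by simpa [hzero] using apply_eq_sum_mul_apply_single (g.comp T) x
    exact one_ne_zero (hg.2.symm.trans this)
  have hflip : flipCoord j x ∈ extremePoints ℝ (closedBall (0 : ι → ℝ) 1) := by
    simpa only [mem_extremePoints_closedBall_pi_iff, abs_flipCoord_apply] using hx
  obtain ⟨h, hh⟩ := (hsm _ hflip).suppFunctionals_nonempty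
  have hneg : g (T (flipCoord j x)) = -1 :=
    apply_flipCoord_eq_neg_one hT hrank hxnorm hg hu hv huv hseg hj hh
  refine ⟨g, fun y hy ↦ ⟨g (T y), (hsm y hy).suppFunctionals_eq_singleton ?_⟩⟩
  have habs : |g (T y)| = 1 :=
    abs_apply_eq_one_of_apply_flipCoord_eq_neg_one hφ hx hg.2 hneg hy
  refine ⟨by rw [norm_smul, Real.norm_eq_abs, habs, hg.1, one_mul], ?_⟩
  rw [smul_apply, smul_eq_mul, ← abs_mul_abs_self, habs, one_mul]

theorem stmt_5_general (hT : ‖T‖ = 1)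
    (hsm : ∀ x ∈ extremePoints ℝ (closedBall (0 : ι → ℝ) 1), IsSmoothPoint (T x))
    (hrank : finrank ℝ (LinearMap.range (T : (ι → ℝ) →ₗ[ℝ] Y)) = 2)
    (hint : ∃ x ∈ extremePoints ℝ (closedBall (0 : ι → ℝ) 1),
      ∃ u ∈ T '' closedBall (0 : ι → ℝ) 1, ∃ v ∈ T '' closedBall (0 : ι → ℝ) 1,
        u ≠ v ∧ T x ∈ openSegment ℝ u v) :
    finrank ℝ (Submodule.span ℝ (suppFunctionals T)) = Fintype.card ι := by
  obtain ⟨x, hx, _, ⟨u, hu, rfl⟩, _, ⟨v, hv, rfl⟩, huv, hseg⟩ := hint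
  obtain ⟨g, hg⟩ := exists_suppFunctionals_eq_singleton_smul hT.le hsm hrank hx
    (mem_closedBall_zero_iff.1 hu) (mem_closedBall_zero_iff.1 hv) huv hseg
  have hspan := finrank_span_suppFunctionals_of_supported_by_multiples
    finite_extremePoints_closedBall_pi hT hg
  rw [hspan, finrank_fintype_fun_eq_card]

end RankTwo

theorem stmt_5 {n : ℕ} {Y : Type*} [NormedAddCommGroup Y] [NormedSpace ℝ Y]
    [FiniteDimensional ℝ Y] (hY : finrank ℝ Y = 2)
    (T : (Fin n → ℝ) →L[ℝ] Y) (hT : ‖T‖ = 1)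
    (hMT : extremePoints ℝ (closedBall (0 : Fin n → ℝ) 1) ⊆
      {x ∈ sphere (0 : Fin n → ℝ) 1 | ‖T x‖ = ‖T‖})
    (hsm : ∀ x ∈ extremePoints ℝ (closedBall (0 : Fin n → ℝ) 1), IsSmoothPoint (T x))
    (hrank : finrank ℝ (LinearMap.range (T : (Fin n → ℝ) →ₗ[ℝ] Y)) = 2)
    (hint : ∃ x ∈ extremePoints ℝ (closedBall (0 : Fin n → ℝ) 1),
      ∃ u ∈ T '' closedBall (0 : Fin n → ℝ) 1, ∃ v ∈ T '' closedBall (0 : Fin n → ℝ) 1,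
        u ≠ v ∧ T x ∈ openSegment ℝ u v) :
    finrank ℝ (Submodule.span ℝ (suppFunctionals T)) = n := by
  simpa using stmt_5_general hT hsm hrank hint
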